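/- Let (X,d) be a geodesic metric space with property (◇) for a constant λ ≥ 1, and let m ≥ 0 be an integer. Then every Lipschitz map φ : Sᵐ → X admits a Lipschitz extension φ̄ : B^{m+1} → X (i.e., φ̄ restricted to Sᵐ equals φ) with Lipschitz constant Lip(φ̄) ≤ (8λ + 12)·Lip(φ). In particular, X is Lipschitz m-connected for every m ≥ 0. -/

import Mathlib

/-- A constant-speed geodesic from `x` to `y`, parameterized on `[0,1]`. -/
def IsGeodesicSegment {X : Type*} [MetricSpace X] (c : ℝ → X) (x y : X) : Prop :=
  c 0 = x ∧ c 1 = y ∧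
    ∀ s ∈ Set.Icc (0:ℝ) 1, ∀ t ∈ Set.Icc (0:ℝ) 1,
      dist (c s) (c t) = dist x y * |s - t|

/-- A metric space is geodesic if any two points are joined by a constant-speed geodesic. -/
def IsGeodesicSpace (X : Type*) [MetricSpace X] : Prop :=
  ∀ x y : X, ∃ c : ℝ → X, IsGeodesicSegment c x y
/-- Property (◇) with constant `lam`: for any two closed balls with non-empty intersection
there are `z, z'` and `ν ≥ 0` with `B(z,ν) ⊆ B₁ ∩ B₂ ⊆ B(z', lam * ν)`. -/
def HasDiamondProperty (X : Type*) [MetricSpace X] (lam : ℝ) : Prop :=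
  ∀ (x₁ x₂ : X) (r₁ r₂ : ℝ),
    (Metric.closedBall x₁ r₁ ∩ Metric.closedBall x₂ r₂).Nonempty →
    ∃ (z z' : X) (ν : ℝ), 0 ≤ ν ∧
      Metric.closedBall z ν ⊆ Metric.closedBall x₁ r₁ ∩ Metric.closedBall x₂ r₂ ∧
      Metric.closedBall x₁ r₁ ∩ Metric.closedBall x₂ r₂ ⊆ Metric.closedBall z' (lam * ν)

/-!
The extension is a cone over `φ` along geodesics issuing from a base point `p = φ u₀`, squeezed
into the outer shell of the ball.

Property (◇) forces geodesics from `p` to end points `x`, `y` to stay close: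
`d(c_x(t), c_y(t)) ≤ 4 λ d(x, y)`. With `D = d(p, x)` and `ε = d(x, y)`, both points lie in the
intersection of the balls `B(p, t(D + ε))` and `B(x, (1 - t)(D + ε) + ε)`, whose radii add up to
`D + 2ε`. A ball `B(z, ν)` inside that intersection has `ν ≤ 2ε`: moving from `z` by `ν` towards `x`
must not leave the ball around `p`. Hence the intersection has diameter at most `2λν ≤ 4λε`.

This estimate does not improve as `t → 0`, so the extension is constantly `p` on the ball of radius
`1/2`, and equals `c_{φ(u)}(2s - 1)` at `s u` for `u` in the sphere and `1/2 ≤ s ≤ 1`. There the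
radial projection to the sphere is 2-Lipschitz, which gives a tangential contribution `8λ K`; the
radial one is `2 · diam φ(Sᵐ) ≤ 4K`.
-/

open Metric Set
open scoped NNReal

section Geodesic

variable {X : Type*} [MetricSpace X]

namespace IsGeodesicSegment

variable {c : ℝ → X} {x y : X} {t : ℝ}

lemma dist_left (hc : IsGeodesicSegment c x y) (ht : t ∈ Icc (0 : ℝ) 1) :
    dist (c t) x = t * dist x y := by
  obtain ⟨h0, -, hspeed⟩ := hc
  simpa only [h0, sub_zero, abs_of_nonneg ht.1, mul_comm] using
    hspeed t ht 0 (left_mem_Icc.2 zero_le_one)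

lemma dist_right (hc : IsGeodesicSegment c x y) (ht : t ∈ Icc (0 : ℝ) 1) :
    dist (c t) y = (1 - t) * dist x y := by
  obtain ⟨-, h1, hspeed⟩ := hc
  simpa only [h1, abs_sub_comm t 1, abs_of_nonneg (sub_nonneg.2 ht.2), mul_comm] using
    hspeed t ht 1 (right_mem_Icc.2 zero_le_one)

lemma lipschitzOnWith {K : ℝ≥0} (hc : IsGeodesicSegment c x y) (hK : dist x y ≤ K) :
    LipschitzOnWith K c (Icc 0 1) :=
  LipschitzOnWith.of_dist_le_mul fun s hs t ht => by
    rw [hc.2.2 s hs t ht, Real.dist_eq]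
    gcongr

lemma mem_inter_closedBall {p : X} {D ε : ℝ} (hc : IsGeodesicSegment c p y)
    (ht : t ∈ Icc (0 : ℝ) 1) (hD : dist p y ≤ D) (hε : dist y x ≤ ε) :
    c t ∈ closedBall p (t * D) ∩ closedBall x ((1 - t) * D + ε) := by
  constructor
  · rw [mem_closedBall, hc.dist_left ht]
    exact mul_le_mul_of_nonneg_left hD ht.1
  · calc dist (c t) x ≤ dist (c t) y + dist y x := dist_triangle _ _ _
      _ = (1 - t) * dist p y + dist y x := by rw [hc.dist_right ht]
      _ ≤ (1 - t) * D + ε :=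
        add_le_add (mul_le_mul_of_nonneg_left hD (sub_nonneg.2 ht.2)) hε

end IsGeodesicSegment

lemma IsGeodesicSpace.exists_dist_eq (hgeo : IsGeodesicSpace X) {x y : X} {r : ℝ} (hr : 0 ≤ r)
    (hrxy : r ≤ dist x y) : ∃ q, dist q x = r ∧ dist q y = dist x y - r := by
  obtain ⟨c, hc⟩ := hgeo x y
  have ht : r / dist x y ∈ Icc (0 : ℝ) 1 :=
    ⟨div_nonneg hr dist_nonneg, div_le_one_of_le₀ hrxy dist_nonneg⟩
  have hmul : r / dist x y * dist x y = r :=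
    div_mul_cancel_of_imp fun h => le_antisymm (h ▸ hrxy) hr
  exact ⟨c (r / dist x y), by rw [hc.dist_left ht, hmul],
    by rw [hc.dist_right ht, sub_mul, one_mul, hmul]⟩

lemma IsGeodesicSpace.radius_le_of_closedBall_subset_inter (hgeo : IsGeodesicSpace X)
    {x₁ x₂ z : X} {r₁ r₂ ν : ℝ} (hν : 0 ≤ ν)
    (hsub : closedBall z ν ⊆ closedBall x₁ r₁ ∩ closedBall x₂ r₂) (hr₁ : r₁ < dist x₁ x₂) :
    ν ≤ r₁ + r₂ - dist x₁ x₂ := by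
  have hνz : ν ≤ dist z x₂ := by
    by_contra! hlt
    have hx₂ : dist x₂ x₁ ≤ r₁ := (hsub (mem_closedBall'.2 hlt.le)).1
    rw [dist_comm] at hx₂
    exact hr₁.not_ge hx₂
  obtain ⟨q, hqz, hqx₂⟩ := hgeo.exists_dist_eq hν hνz
  have hqx₁ : dist q x₁ ≤ r₁ := (hsub (mem_closedBall.2 hqz.le)).1
  have hzx₂ : dist z x₂ ≤ r₂ := (hsub (mem_closedBall_self hν)).2
  linarith [dist_triangle_left x₁ x₂ q]

namespace HasDiamondProperty

variable {lam : ℝ}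

lemma mono {lam' : ℝ} (hdia : HasDiamondProperty X lam) (h : lam ≤ lam') :
    HasDiamondProperty X lam' := fun x₁ x₂ r₁ r₂ hne => by
  obtain ⟨z, z', ν, hν, hsub, hsup⟩ := hdia x₁ x₂ r₁ r₂ hne
  exact ⟨z, z', ν, hν, hsub,
    hsup.trans (closedBall_subset_closedBall (mul_le_mul_of_nonneg_right h hν))⟩

lemma dist_le_of_mem_inter (hdia : HasDiamondProperty X lam) (hlam : 0 ≤ lam)
    (hgeo : IsGeodesicSpace X) {x₁ x₂ a b : X} {r₁ r₂ : ℝ} (hr₁ : r₁ < dist x₁ x₂)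
    (ha : a ∈ closedBall x₁ r₁ ∩ closedBall x₂ r₂)
    (hb : b ∈ closedBall x₁ r₁ ∩ closedBall x₂ r₂) :
    dist a b ≤ 2 * lam * (r₁ + r₂ - dist x₁ x₂) := by
  obtain ⟨z, z', ν, hν, hsub, hsup⟩ := hdia x₁ x₂ r₁ r₂ ⟨a, ha⟩
  calc dist a b ≤ dist a z' + dist b z' := dist_triangle_right _ _ _
    _ ≤ lam * ν + lam * ν := add_le_add (hsup ha) (hsup hb)
    _ = 2 * lam * ν := by ring
    _ ≤ 2 * lam * (r₁ + r₂ - dist x₁ x₂) := by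
      gcongr
      exact hgeo.radius_le_of_closedBall_subset_inter hν hsub hr₁

lemma dist_geodesic_le (hdia : HasDiamondProperty X lam) (hlam : 1 ≤ lam)
    (hgeo : IsGeodesicSpace X) {p x y : X} {c c' : ℝ → X} (hc : IsGeodesicSegment c p x)
    (hc' : IsGeodesicSegment c' p y) {t : ℝ} (ht : t ∈ Icc (0 : ℝ) 1) :
    dist (c t) (c' t) ≤ 4 * lam * dist x y := by
  have hmem : c t ∈ closedBall p (t * (dist p x + dist x y)) ∩
      closedBall x ((1 - t) * (dist p x + dist x y) + dist x y) :=
    hc.mem_inter_closedBall ht (le_add_of_nonneg_right dist_nonneg)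
      ((dist_self x).trans_le dist_nonneg)
  have hmem' : c' t ∈ closedBall p (t * (dist p x + dist x y)) ∩
      closedBall x ((1 - t) * (dist p x + dist x y) + dist x y) :=
    hc'.mem_inter_closedBall ht (dist_triangle p x y) (dist_comm y x).le
  rcases lt_or_ge (t * (dist p x + dist x y)) (dist p x) with hlt | hge
  · calc dist (c t) (c' t) ≤ 2 * lam * (t * (dist p x + dist x y) +
          ((1 - t) * (dist p x + dist x y) + dist x y) - dist p x) :=
        hdia.dist_le_of_mem_inter (zero_le_one.trans hlam) hgeo hlt hmem hmem'
      _ = 4 * lam * dist x y := by ring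
  · -- The ball around `p` now reaches `x`, which makes the radius around `x` at most `2 d(x, y)`.
    have hr : (1 - t) * (dist p x + dist x y) + dist x y ≤ 2 * dist x y := by linarith
    calc dist (c t) (c' t) ≤ dist (c t) x + dist (c' t) x := dist_triangle_right _ _ _
      _ ≤ 2 * dist x y + 2 * dist x y := add_le_add (hmem.2.trans hr) (hmem'.2.trans hr)
      _ = 4 * 1 * dist x y := by ring
      _ ≤ 4 * lam * dist x y := by gcongr

end HasDiamondProperty

end Geodesic

section Shell

/-- The radial reparametrization that collapses `[0, 1/2]` to `0` and stretches `[1/2, 1]` affinely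
onto `[0, 1]`. -/
def shellParam (r : ℝ) : ℝ := max 0 (2 * r - 1)

lemma shellParam_of_le_half {r : ℝ} (hr : r ≤ 1 / 2) : shellParam r = 0 :=
  max_eq_left (by linarith)

lemma shellParam_one : shellParam 1 = 1 := by norm_num [shellParam]

lemma shellParam_mem_Icc {r : ℝ} (hr : r ≤ 1) : shellParam r ∈ Icc (0 : ℝ) 1 :=
  ⟨le_max_left _ _, max_le zero_le_one (by linarith)⟩

lemma dist_shellParam_le (s t : ℝ) : dist (shellParam s) (shellParam t) ≤ 2 * dist s t := by
  calc |max 0 (2 * s - 1) - max 0 (2 * t - 1)| ≤ |2 * s - 1 - (2 * t - 1)| := by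
        simpa only [max_comm (0 : ℝ)] using abs_max_sub_max_le_abs (2 * s - 1) (2 * t - 1) 0
    _ = 2 * |s - t| := by
      rw [sub_sub_sub_cancel_right, ← mul_sub, abs_mul, abs_two]

variable {E : Type*} [NormedAddCommGroup E]

lemma exists_eq_norm_smul_sphere [NormedSpace ℝ E] [Nontrivial E] (w : E) :
    ∃ u : sphere (0 : E) 1, w = ‖w‖ • (u : E) := by
  rcases eq_or_ne w 0 with rfl | hw
  · obtain ⟨u, hu⟩ : (sphere (0 : E) 1).Nonempty := NormedSpace.sphere_nonempty.2 zero_le_one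
    exact ⟨⟨u, hu⟩, by rw [norm_zero, zero_smul]⟩
  · exact ⟨⟨‖w‖⁻¹ • w, mem_sphere_zero_iff_norm.2 (norm_smul_inv_norm (𝕜 := ℝ) hw)⟩,
      (smul_inv_smul₀ (norm_ne_zero_iff.2 hw) w).symm⟩

lemma dist_le_dist_smul_smul_of_mem_sphere [NormedSpace ℝ E] (u v : sphere (0 : E) 1) {s t : ℝ}
    (hs : 0 ≤ s) (ht : 0 ≤ t) : dist s t ≤ dist (s • (u : E)) (t • (v : E)) := by
  simpa only [norm_smul, norm_eq_of_mem_sphere, mul_one, Real.norm_of_nonneg, hs, ht,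
    dist_eq_norm (s • (u : E))] using dist_norm_norm_le (s • (u : E)) (t • (v : E))

variable [InnerProductSpace ℝ E]

lemma norm_smul_sub_smul_sq {u v : E} (huv : ‖u‖ = ‖v‖) (s t : ℝ) :
    ‖s • u - t • v‖ ^ 2 = (s - t) ^ 2 * ‖v‖ ^ 2 + s * t * ‖u - v‖ ^ 2 := by
  rw [norm_sub_sq_real, norm_sub_sq_real, norm_smul, norm_smul, real_inner_smul_left,
    real_inner_smul_right, huv, mul_pow, mul_pow, Real.norm_eq_abs, Real.norm_eq_abs, sq_abs,
    sq_abs]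
  ring

lemma mul_dist_le_dist_smul_smul {u v : E} (huv : ‖u‖ = ‖v‖) {r s t : ℝ} (hr : 0 ≤ r)
    (hs : r ≤ s) (ht : r ≤ t) : r * dist u v ≤ dist (s • u) (t • v) := by
  have hs₀ : 0 ≤ s := hr.trans hs
  rw [dist_eq_norm, dist_eq_norm]
  refine le_of_sq_le_sq ?_ (norm_nonneg _)
  calc (r * ‖u - v‖) ^ 2 = r * r * ‖u - v‖ ^ 2 := by ring
    _ ≤ s * t * ‖u - v‖ ^ 2 := by gcongr
    _ ≤ (s - t) ^ 2 * ‖v‖ ^ 2 + s * t * ‖u - v‖ ^ 2 := le_add_of_nonneg_left (by positivity)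
    _ = ‖s • u - t • v‖ ^ 2 := (norm_smul_sub_smul_sq huv s t).symm

variable {X : Type*} [PseudoMetricSpace X] {H : sphere (0 : E) 1 → ℝ → X} {A B : ℝ≥0}

lemma dist_shellParam_polar_le (h0 : ∀ u v, H u 0 = H v 0)
    (hA : ∀ t ∈ Icc (0 : ℝ) 1, LipschitzWith A fun u => H u t)
    (hB : ∀ u, LipschitzOnWith B (H u) (Icc 0 1)) (u v : sphere (0 : E) 1) {s t : ℝ}
    (hs : s ∈ Icc (0 : ℝ) 1) (ht : t ∈ Icc (0 : ℝ) 1) :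
    dist (H u (shellParam s)) (H v (shellParam t)) ≤
      (2 * A + 2 * B) * dist (s • (u : E)) (t • (v : E)) := by
  wlog hts : t ≤ s generalizing u v s t
  · simpa only [dist_comm] using this v u ht hs (le_of_not_ge hts)
  have radial : dist (H u (shellParam s)) (H u (shellParam t)) ≤
      2 * B * dist (s • (u : E)) (t • (v : E)) := by
    calc dist (H u (shellParam s)) (H u (shellParam t)) ≤ B * dist (shellParam s) (shellParam t) :=
          (hB u).dist_le_mul _ (shellParam_mem_Icc hs.2) _ (shellParam_mem_Icc ht.2)
      _ ≤ B * (2 * dist s t) := by gcongr; exact dist_shellParam_le s t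
      _ ≤ B * (2 * dist (s • (u : E)) (t • (v : E))) := by
        gcongr
        exact dist_le_dist_smul_smul_of_mem_sphere u v hs.1 ht.1
      _ = 2 * B * dist (s • (u : E)) (t • (v : E)) := by ring
  have tangential : dist (H u (shellParam t)) (H v (shellParam t)) ≤
      2 * A * dist (s • (u : E)) (t • (v : E)) := by
    rcases le_total t (1 / 2) with hhalf | hhalf
    · rw [shellParam_of_le_half hhalf, h0 u v, dist_self]
      positivity
    · have hproj : 1 / 2 * dist (u : E) v ≤ dist (s • (u : E)) (t • (v : E)) :=
        mul_dist_le_dist_smul_smul (by simp only [norm_eq_of_mem_sphere]) (by norm_num)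
          (hhalf.trans hts) hhalf
      calc dist (H u (shellParam t)) (H v (shellParam t)) ≤ A * dist u v :=
            (hA _ (shellParam_mem_Icc ht.2)).dist_le_mul u v
        _ = 2 * A * (1 / 2 * dist (u : E) v) := by rw [Subtype.dist_eq]; ring
        _ ≤ 2 * A * dist (s • (u : E)) (t • (v : E)) := by gcongr
  linarith [dist_triangle (H u (shellParam s)) (H u (shellParam t)) (H v (shellParam t))]

lemma exists_lipschitz_extension_of_nullhomotopy [Nontrivial E] (h0 : ∀ u v, H u 0 = H v 0)
    (hA : ∀ t ∈ Icc (0 : ℝ) 1, LipschitzWith A fun u => H u t)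
    (hB : ∀ u, LipschitzOnWith B (H u) (Icc 0 1)) :
    ∃ f : closedBall (0 : E) 1 → X,
      (∀ u : sphere (0 : E) 1, f ⟨u, sphere_subset_closedBall u.2⟩ = H u 1) ∧
      LipschitzWith (2 * A + 2 * B) f := by
  choose dir hdir using exists_eq_norm_smul_sphere (E := E)
  refine ⟨fun w => H (dir w) (shellParam ‖(w : E)‖), fun u => ?_,
    LipschitzWith.of_dist_le_mul fun w w' => ?_⟩
  · have hu : dir u = u := by
      refine Subtype.ext ?_
      simpa only [norm_eq_of_mem_sphere, one_smul] using (hdir u).symm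
    simp only [hu, norm_eq_of_mem_sphere, shellParam_one]
  · have hnorm (w : closedBall (0 : E) 1) : ‖(w : E)‖ ∈ Icc (0 : ℝ) 1 :=
      ⟨norm_nonneg _, mem_closedBall_zero_iff.1 w.2⟩
    simpa [← hdir, Subtype.dist_eq] using
      dist_shellParam_polar_le h0 hA hB (dir w) (dir w') (hnorm w) (hnorm w')

end Shell

theorem lipschitz_extension_of_diamond_general {X E : Type*} [MetricSpace X]
    [NormedAddCommGroup E] [InnerProductSpace ℝ E] [Nontrivial E] {lam : ℝ}
    (hgeo : IsGeodesicSpace X) (hdia : HasDiamondProperty X lam)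
    {φ : sphere (0 : E) 1 → X} {K : ℝ≥0} (hφ : LipschitzWith K φ) :
    ∃ φb : closedBall (0 : E) 1 → X,
      (∀ u : sphere (0 : E) 1, φb ⟨u, sphere_subset_closedBall u.2⟩ = φ u) ∧
      ∀ u v, dist (φb u) (φb v) ≤ (8 * max lam 1 + 4) * K * dist u v := by
  obtain ⟨u₀⟩ : Nonempty (sphere (0 : E) 1) :=
    (NormedSpace.sphere_nonempty.2 zero_le_one).to_subtype
  choose c hc using fun u => hgeo (φ u₀) (φ u)
  obtain ⟨L, hL⟩ : ∃ L : ℝ≥0, (L : ℝ) = max lam 1 :=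
    ⟨⟨max lam 1, zero_le_one.trans (le_max_right lam 1)⟩, rfl⟩
  have hangular (t) (ht : t ∈ Icc (0 : ℝ) 1) : LipschitzWith (4 * L * K) fun u => c u t :=
    LipschitzWith.of_dist_le_mul fun u v =>
      calc dist (c u t) (c v t) ≤ 4 * max lam 1 * dist (φ u) (φ v) :=
            (hdia.mono (le_max_left lam 1)).dist_geodesic_le (le_max_right lam 1) hgeo (hc u)
              (hc v) ht
        _ ≤ 4 * max lam 1 * (K * dist u v) := by gcongr; exact hφ.dist_le_mul u v
        _ = (4 * L * K : ℝ≥0) * dist u v := by push_cast; rw [hL]; ring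
  have hspeed (u) : LipschitzOnWith (2 * K) (c u) (Icc 0 1) :=
    (hc u).lipschitzOnWith <|
      calc dist (φ u₀) (φ u) ≤ K * dist (u₀ : E) u := hφ.dist_le_mul u₀ u
        _ ≤ K * 2 := by
          gcongr
          simpa [one_add_one_eq_two] using dist_triangle_right (u₀ : E) u 0
        _ = (2 * K : ℝ≥0) := by push_cast; ring
  obtain ⟨φb, hext, hLip⟩ := exists_lipschitz_extension_of_nullhomotopy
    (fun u v => (hc u).1.trans (hc v).1.symm) hangular hspeed
  refine ⟨φb, fun u => (hext u).trans (hc u).2.1, fun u v => (hLip.dist_le_mul u v).trans_eq ?_⟩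
  push_cast
  rw [hL]
  ring

theorem lipschitz_extension_of_diamond {X : Type*} [MetricSpace X] (lam : ℝ) (hlam : 1 ≤ lam)
    (hgeo : IsGeodesicSpace X) (hdia : HasDiamondProperty X lam)
    (m : ℕ) (φ : Metric.sphere (0 : EuclideanSpace ℝ (Fin (m + 1))) 1 → X)
    (K : NNReal) (hφ : LipschitzWith K φ) :
    ∃ φb : Metric.closedBall (0 : EuclideanSpace ℝ (Fin (m + 1))) 1 → X,
      (∀ u : Metric.sphere (0 : EuclideanSpace ℝ (Fin (m + 1))) 1,
        φb ⟨u.1, Metric.sphere_subset_closedBall u.2⟩ = φ u) ∧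
      ∀ u v, dist (φb u) (φb v) ≤ (8 * lam + 12) * K * dist u v := by
  obtain ⟨φb, hext, hLip⟩ := lipschitz_extension_of_diamond_general hgeo hdia hφ
  exact ⟨φb, hext, fun u v => (hLip u v).trans (by rw [max_eq_left hlam]; gcongr; norm_num)⟩
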